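/- arXiv:1609.08743 — 2 statements merged into one kernel-verified Lean document; each statement's English description precedes it below -/
import Mathlib

section
/- Assume a ∈ (0,1), b ≥ 1−a, and that α, β, p, h satisfy either α ≥ √3·β, or (α < √3·β and 4h(β+p) ≥ p⁴). Let c, d > 0 with 0 < c/d ≤ (β+p)/k, let δ₁ = [(a−b−1) + √((p−1)² + 4β(c/d))]/2 (the larger root of (c/d−1)β + (a−b−1)δ − δ² = 0, and δ₁ < 0), and let δ ∈ (a−1, δ₁]. Then the function G(x) = [F(a−1−δ, b+δ; p; 1−x^d) − F(a−1, b; p; 1−x^c)]/(1−x^c) is strictly decreasing on (0,1), with limit C₂(δ) = 1/(p·B(a−δ, b+1+δ)) − 1/(p·B(a, b+1)) as x → 0⁺ and limit C₁(δ) = (d/(pc))·((c/d − 1)β + (a−b−1)δ − δ²) ≥ 0 as x → 1⁻; in particular G maps (0,1) onto (C₁(δ), C₂(δ)). -/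
open Real Set Filter Topology

/-- The Gaussian hypergeometric function `F(a,b;c;x)`, defined as a power series
with Pochhammer (shifted factorial) coefficients. -/
noncomputable def hyp (a b c x : ℝ) : ℝ :=
  ∑' n : ℕ, ((∏ i ∈ Finset.range n, (a + i)) * (∏ i ∈ Finset.range n, (b + i)) /
    ((∏ i ∈ Finset.range n, (c + i)) * (Nat.factorial n))) * x ^ n

/-- The Euler beta function `B(x,y) = Γ(x)Γ(y)/Γ(x+y)`. -/
noncomputable def betaFn (x y : ℝ) : ℝ := Real.Gamma x * Real.Gamma y / Real.Gamma (x + y)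

/-!
In the variable `v = x ^ c` and with `ρ = d / c`, the function `G` is `D v / (1 - v)`, where
`D v = F(a-1-δ, b+δ; p; 1 - v ^ ρ) - F(a-1, b; p; 1 - v)` vanishes at `v = 1`. So `G` is minus the
slope of a secant of `D` through the point at `1`, and it decreases once `D` is strictly convex.

A contiguous relation brings `D''` into closed form, and its positivity comes down to two facts.
The first is `v ^ ρ * F₁(1 - v ^ ρ) ≤ v * F₂(1 - v)` with `F₁ = F(a-δ, b+1+δ; p+2; ·)` and
`F₂ = F(a, b+1; p+2; ·)`: there is equality at `v = 1`, and the logarithmic derivatives compare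
because of Chebyshev's inequality for sums. The second is, with `x = -(a-1-δ)(b+δ) * ρ` and
`σ = p ^ 2 / (p + β)`, the inequality `x * (σ - x) ≤ α * β`. Here `x ≤ β` by the choice of `δ₁`;
if `α ≥ √3 * β`, then `2 * β ≤ σ`, so the left side is largest at `x = β`, and otherwise
`4 * h * (β + p) ≥ p ^ 4` says that its overall maximum `σ ^ 2 / 4` is at most `α * β`.
-/

/-! ### Power series and weighted sums -/

theorem hasDerivAt_tsum_mul_pow {f : ℕ → ℝ} {R t : ℝ}
    (hf : Summable fun n : ℕ => |((n : ℝ) + 1) * f (n + 1)| * R ^ n) (ht : |t| < R) :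
    HasDerivAt (fun x => ∑' n, f n * x ^ n) (∑' n : ℕ, ((n : ℝ) + 1) * f (n + 1) * t ^ n) t := by
  have hR : 0 < R := (abs_nonneg t).trans_lt ht
  have hterm (n : ℕ) : |(n + 1 : ℕ) * f (n + 1)| * R ^ (n + 1 - 1) =
      |((n : ℝ) + 1) * f (n + 1)| * R ^ n := by
    rw [Nat.cast_succ, Nat.add_sub_cancel]
  have hu : Summable fun n : ℕ => |n * f n| * R ^ (n - 1) :=
    (summable_nat_add_iff 1).1 (hf.congr fun n => (hterm n).symm)
  have hbound : ∀ (n : ℕ), ∀ x ∈ Metric.ball (0 : ℝ) R,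
      ‖f n * (n * x ^ (n - 1))‖ ≤ |n * f n| * R ^ (n - 1) := by
    intro n x hx
    rw [← mul_assoc, mul_comm (f n), norm_mul, norm_pow, Real.norm_eq_abs]
    gcongr
    exact (mem_ball_zero_iff.1 hx).le
  have hderiv := hasDerivAt_tsum_of_isPreconnected (g := fun n x => f n * x ^ n) hu
    Metric.isOpen_ball (convex_ball _ _).isPreconnected
    (fun n x _ => (hasDerivAt_pow n x).const_mul (f n)) hbound (Metric.mem_ball_self hR)
    (summable_of_ne_finset_zero (s := {0}) fun n hn => by
      simp [Finset.notMem_singleton.1 hn])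
    (mem_ball_zero_iff.2 ht)
  refine hderiv.congr_deriv ?_
  rw [(Summable.of_norm_bounded hu fun n => hbound n t (mem_ball_zero_iff.2 ht)).tsum_eq_zero_add]
  simp only [Nat.cast_zero, zero_mul, mul_zero, zero_add, Nat.cast_succ, Nat.add_sub_cancel]
  exact tsum_congr fun n => by ring

theorem one_sub_mul_tsum_succ_mul_pow {f : ℕ → ℝ} {t : ℝ}
    (hf : Summable fun n : ℕ => ((n : ℝ) + 1) * f (n + 1) * t ^ n) :
    (1 - t) * ∑' n : ℕ, ((n : ℝ) + 1) * f (n + 1) * t ^ n =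
      ∑' n : ℕ, (((n : ℝ) + 1) * f (n + 1) - n * f n) * t ^ n := by
  have hshift (n : ℕ) : t * (((n : ℝ) + 1) * f (n + 1) * t ^ n) =
      ((n + 1 : ℕ) : ℝ) * f (n + 1) * t ^ (n + 1) := by
    push_cast
    ring
  have hsum : Summable fun n : ℕ => (n : ℝ) * f n * t ^ n :=
    (summable_nat_add_iff 1).1 ((hf.mul_left t).congr hshift)
  have hmul : t * ∑' n : ℕ, ((n : ℝ) + 1) * f (n + 1) * t ^ n =
      ∑' n : ℕ, (n : ℝ) * f n * t ^ n := by
    rw [hsum.tsum_eq_zero_add, ← tsum_mul_left, tsum_congr hshift]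
    simp
  rw [sub_mul, one_mul, hmul, ← hf.tsum_sub hsum]
  exact tsum_congr fun n => (sub_mul ..).symm

theorem sum_mul_sum_mul_le_of_antitone {f g s : ℕ → ℝ}
    (hfg : ∀ i j, i ≤ j → f i * g j ≤ f j * g i) (hs : Antitone s) (N : ℕ) :
    (∑ i ∈ Finset.range N, f i * s i) * ∑ j ∈ Finset.range N, g j ≤
      (∑ i ∈ Finset.range N, f i) * ∑ j ∈ Finset.range N, g j * s j := by
  let D (i j : ℕ) : ℝ := f i * (g j * s j) - f i * s i * g j
  have hsymm : 0 ≤ ∑ i ∈ Finset.range N, ∑ j ∈ Finset.range N, (D i j + D j i) := by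
    refine Finset.sum_nonneg fun i _ => Finset.sum_nonneg fun j _ => ?_
    have hD : D i j + D j i = (f j * g i - f i * g j) * (s i - s j) := by ring
    rw [hD]
    rcases le_total i j with hij | hji
    · exact mul_nonneg (sub_nonneg.2 (hfg i j hij)) (sub_nonneg.2 (hs hij))
    · exact mul_nonneg_of_nonpos_of_nonpos (sub_nonpos.2 (hfg j i hji)) (sub_nonpos.2 (hs hji))
  simp only [Finset.sum_add_distrib] at hsymm
  rw [Finset.sum_comm (f := fun i j => D j i)] at hsymm
  rw [← sub_nonneg, Finset.sum_mul_sum, Finset.sum_mul_sum, ← Finset.sum_sub_distrib]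
  simp only [← Finset.sum_sub_distrib]
  linarith

theorem tsum_mul_tsum_mul_le_of_antitone {f g s : ℕ → ℝ}
    (hfg : ∀ i j, i ≤ j → f i * g j ≤ f j * g i) (hs : Antitone s) (hf : Summable f)
    (hg : Summable g) (hfs : Summable fun n => f n * s n) (hgs : Summable fun n => g n * s n) :
    (∑' n, f n * s n) * ∑' n, g n ≤ (∑' n, f n) * ∑' n, g n * s n :=
  le_of_tendsto_of_tendsto' (hfs.hasSum.tendsto_sum_nat.mul hg.hasSum.tendsto_sum_nat)
    (hf.hasSum.tendsto_sum_nat.mul hgs.hasSum.tendsto_sum_nat)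
    (sum_mul_sum_mul_le_of_antitone hfg hs)

/-! ### The hypergeometric series -/

/-- The coefficient of `x ^ n` in the hypergeometric series `hyp a b c x`. -/
noncomputable def hypCoeff (a b c : ℝ) (n : ℕ) : ℝ :=
  (∏ i ∈ Finset.range n, (a + i)) * (∏ i ∈ Finset.range n, (b + i)) /
    ((∏ i ∈ Finset.range n, (c + i)) * (Nat.factorial n))

theorem hyp_eq_tsum (a b c : ℝ) : hyp a b c = fun x => ∑' n, hypCoeff a b c n * x ^ n := rfl

theorem hypCoeff_zero (a b c : ℝ) : hypCoeff a b c 0 = 1 := by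
  simp [hypCoeff]

theorem hypCoeff_succ (a b c : ℝ) (n : ℕ) :
    hypCoeff a b c (n + 1) = hypCoeff a b c n * ((a + n) * (b + n) / ((c + n) * (n + 1))) := by
  simp only [hypCoeff, Finset.prod_range_succ, Nat.factorial_succ, Nat.cast_mul, Nat.cast_succ,
    div_mul_div_comm]
  congr 1 <;> ring

theorem hyp_zero (a b c : ℝ) : hyp a b c 0 = 1 := by
  simp only [hyp_eq_tsum]
  rw [tsum_eq_single 0 fun n hn => by simp [hn], hypCoeff_zero, pow_zero, mul_one]

theorem succ_mul_hypCoeff_succ (a b c : ℝ) (n : ℕ) :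
    (n + 1) * hypCoeff a b c (n + 1) = a * b / c * hypCoeff (a + 1) (b + 1) (c + 1) n := by
  induction n with
  | zero => simp [hypCoeff_zero, hypCoeff_succ]
  | succ n ih =>
    rw [hypCoeff_succ a b c (n + 1), hypCoeff_succ (a + 1), ← mul_assoc (a * b / c), ← ih]
    push_cast
    simp only [add_assoc, add_comm (1 : ℝ)]
    field_simp

theorem hypCoeff_add_one_right (a b : ℝ) {c : ℝ} (hc : 0 < c) (n : ℕ) :
    hypCoeff a b (c + 1) n = hypCoeff a b c n * (c / (c + n)) := by
  induction n with
  | zero => simp [hypCoeff_zero, hc.ne']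
  | succ n ih =>
    rw [hypCoeff_succ, hypCoeff_succ, ih]
    push_cast
    field_simp
    ring

theorem sum_range_hypCoeff {a b c : ℝ} (habc : a + b + 1 = c) (hc : 0 < c) (n : ℕ) :
    ∑ k ∈ Finset.range (n + 1), hypCoeff a b c k = hypCoeff (a + 1) (b + 1) c n := by
  induction n with
  | zero => simp [hypCoeff_zero]
  | succ n ih =>
    have hlast : hypCoeff a b c (n + 1) =
        hypCoeff (a + 1) (b + 1) c n * (a * b / ((c + n) * (n + 1))) := by
      have := succ_mul_hypCoeff_succ a b c n
      rw [hypCoeff_add_one_right _ _ hc] at this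
      field_simp at this ⊢
      linear_combination this
    rw [Finset.sum_range_succ, ih, hlast, hypCoeff_succ (a + 1)]
    field_simp
    rw [← habc]
    ring

theorem summable_hypCoeff_mul_pow (a b c : ℝ) {t : ℝ} (ht : |t| < 1) :
    Summable fun n => hypCoeff a b c n * t ^ n := by
  obtain ⟨r, htr, hr⟩ := exists_between ht
  have hratio : Tendsto (fun n : ℕ => (a + n) * (b + n) / ((c + n) * (n + 1)) * t) atTop (𝓝 t) := by
    have hac := tendsto_add_mul_div_add_mul_atTop_nhds a c 1 (one_ne_zero (α := ℝ))
    have hb := tendsto_add_mul_div_add_mul_atTop_nhds b 1 1 (one_ne_zero (α := ℝ))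
    simpa [div_mul_div_comm, add_comm (1 : ℝ)] using (hac.mul hb).mul_const t
  refine summable_of_ratio_norm_eventually_le hr ?_
  filter_upwards [hratio.abs.eventually_le_const htr] with n hn
  calc ‖hypCoeff a b c (n + 1) * t ^ (n + 1)‖
      = |(a + n) * (b + n) / ((c + n) * (n + 1)) * t| * ‖hypCoeff a b c n * t ^ n‖ := by
        rw [hypCoeff_succ, ← Real.norm_eq_abs, ← norm_mul]
        ring_nf
    _ ≤ r * ‖hypCoeff a b c n * t ^ n‖ := by gcongr

theorem hasDerivAt_hyp (a b c : ℝ) {t : ℝ} (ht : |t| < 1) :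
    HasDerivAt (hyp a b c) (a * b / c * hyp (a + 1) (b + 1) (c + 1) t) t := by
  obtain ⟨R, htR, hR⟩ := exists_between ht
  have hR₀ : |R| = R := abs_of_pos ((abs_nonneg t).trans_lt htR)
  have hsum : Summable fun n : ℕ => |((n : ℝ) + 1) * hypCoeff a b c (n + 1)| * R ^ n := by
    refine ((summable_hypCoeff_mul_pow (a + 1) (b + 1) (c + 1)
      (hR₀.trans_lt hR)).abs.mul_left |a * b / c|).congr fun n => ?_
    rw [succ_mul_hypCoeff_succ, abs_mul, abs_mul, abs_pow, hR₀, mul_assoc]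
  refine (hasDerivAt_tsum_mul_pow hsum htR).congr_deriv ?_
  simp only [succ_mul_hypCoeff_succ, mul_assoc, tsum_mul_left, hyp_eq_tsum]

theorem one_sub_mul_hyp_add_one (a b : ℝ) {c t : ℝ} (hc : 0 < c) (ht : |t| < 1) :
    (1 - t) * (a * b / c * hyp (a + 1) (b + 1) (c + 1) t) =
      (a + b - c) * hyp a b c t + (c - a) * (c - b) / c * hyp a b (c + 1) t := by
  have hcoeff (n : ℕ) : (n + 1) * hypCoeff a b c (n + 1) - n * hypCoeff a b c n =
      (a + b - c) * hypCoeff a b c n + (c - a) * (c - b) / c * hypCoeff a b (c + 1) n := by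
    rw [hypCoeff_succ, hypCoeff_add_one_right a b hc]
    field_simp
    ring
  have hderiv : Summable fun n : ℕ => ((n : ℝ) + 1) * hypCoeff a b c (n + 1) * t ^ n := by
    simpa only [succ_mul_hypCoeff_succ, mul_assoc] using
      (summable_hypCoeff_mul_pow (a + 1) (b + 1) (c + 1) ht).mul_left (a * b / c)
  calc (1 - t) * (a * b / c * hyp (a + 1) (b + 1) (c + 1) t)
      = (1 - t) * ∑' n : ℕ, ((n : ℝ) + 1) * hypCoeff a b c (n + 1) * t ^ n := by
        simp only [succ_mul_hypCoeff_succ, mul_assoc, tsum_mul_left, hyp_eq_tsum]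
    _ = ∑' n : ℕ, ((a + b - c) * (hypCoeff a b c n * t ^ n) +
          (c - a) * (c - b) / c * (hypCoeff a b (c + 1) n * t ^ n)) := by
        rw [one_sub_mul_tsum_succ_mul_pow hderiv]
        exact tsum_congr fun n => by rw [hcoeff]; ring
    _ = _ := by
        rw [((summable_hypCoeff_mul_pow a b c ht).mul_left _).tsum_add
          ((summable_hypCoeff_mul_pow a b (c + 1) ht).mul_left _), tsum_mul_left, tsum_mul_left]
        rfl

theorem hypCoeff_pos {a b c : ℝ} (ha : 0 < a) (hb : 0 < b) (hc : 0 < c) (n : ℕ) :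
    0 < hypCoeff a b c n := by
  unfold hypCoeff
  have hprod {x : ℝ} (hx : 0 < x) : 0 < ∏ i ∈ Finset.range n, (x + i) :=
    Finset.prod_pos fun i _ => by positivity
  have := hprod ha
  have := hprod hb
  have := hprod hc
  positivity

theorem hyp_pos {a b c t : ℝ} (ha : 0 < a) (hb : 0 < b) (hc : 0 < c) (ht : t ∈ Ico 0 1) :
    0 < hyp a b c t := by
  have hnonneg (n : ℕ) : 0 ≤ hypCoeff a b c n * t ^ n :=
    mul_nonneg (hypCoeff_pos ha hb hc n).le (pow_nonneg ht.1 n)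
  have hsum := summable_hypCoeff_mul_pow a b c (abs_lt.2 ⟨by linarith [ht.1], ht.2⟩)
  exact hsum.tsum_pos hnonneg 0 (by simp [hypCoeff_zero])

theorem hypCoeff_add_one_right_le {a b c : ℝ} (ha : 0 < a) (hb : 0 < b) (hc : 0 < c) (n : ℕ) :
    hypCoeff a b (c + 1) n ≤ hypCoeff a b c n := by
  rw [hypCoeff_add_one_right a b hc]
  exact mul_le_of_le_one_right (hypCoeff_pos ha hb hc n).le
    (div_le_one_of_le₀ (by simp) (by positivity))

theorem hyp_add_one_right_lt {a b c t : ℝ} (ha : 0 < a) (hb : 0 < b) (hc : 0 < c)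
    (ht : t ∈ Ioo 0 1) : hyp a b (c + 1) t < hyp a b c t := by
  have hsum (c : ℝ) := summable_hypCoeff_mul_pow a b c (abs_lt.2 ⟨by linarith [ht.1], ht.2⟩)
  have hone : hypCoeff a b (c + 1) 1 < hypCoeff a b c 1 := by
    rw [hypCoeff_add_one_right a b hc]
    exact mul_lt_of_lt_one_right (hypCoeff_pos ha hb hc 1)
      ((div_lt_one (by positivity)).2 (by simp))
  exact (hsum (c + 1)).tsum_lt_tsum (i := 1) (fun n => mul_le_mul_of_nonneg_right
    (hypCoeff_add_one_right_le ha hb hc n) (pow_nonneg ht.1.le n))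
    (mul_lt_mul_of_pos_right hone (pow_pos ht.1 1)) (hsum c)

theorem hyp_add_one_right_le {a b c t : ℝ} (ha : 0 < a) (hb : 0 < b) (hc : 0 < c)
    (ht : t ∈ Ico 0 1) : hyp a b (c + 1) t ≤ hyp a b c t := by
  rcases ht.1.eq_or_lt with rfl | ht₀
  · simp only [hyp_zero, le_refl]
  · exact (hyp_add_one_right_lt ha hb hc ⟨ht₀, ht.2⟩).le

theorem hypCoeff_mul_hypCoeff_le {a b a' b' c : ℝ} (ha : 0 < a) (hb : 0 < b) (ha' : 0 < a')
    (hb' : 0 < b') (hc : 0 < c) (hadd : a' + b' ≤ a + b) (hmul : a' * b' ≤ a * b) {i j : ℕ}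
    (hij : i ≤ j) :
    hypCoeff a b c i * hypCoeff a' b' c j ≤ hypCoeff a b c j * hypCoeff a' b' c i := by
  induction j, hij using Nat.le_induction with
  | base => rfl
  | succ j _ ih =>
    have hfactor : (a' + j) * (b' + j) ≤ (a + j) * (b + j) := by
      nlinarith [mul_le_mul_of_nonneg_right hadd j.cast_nonneg]
    have hpos := mul_pos (hypCoeff_pos ha hb hc j) (hypCoeff_pos ha' hb' hc i)
    rw [hypCoeff_succ, hypCoeff_succ, ← mul_assoc, mul_right_comm (hypCoeff a b c j)]
    refine mul_le_mul ih ?_ (by positivity) hpos.le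
    gcongr

/-- Increasing `c` to `c + 1` weights the series by the decreasing sequence `c / (c + n)`. -/
theorem hyp_add_one_mul_hyp_le {a b a' b' c z t : ℝ} (ha : 0 < a) (hb : 0 < b) (ha' : 0 < a')
    (hb' : 0 < b') (hc : 0 < c) (hadd : a' + b' ≤ a + b) (hmul : a' * b' ≤ a * b) (hz : 0 ≤ z)
    (hzt : z ≤ t) (ht : t < 1) :
    hyp a b (c + 1) t * hyp a' b' c z ≤ hyp a b c t * hyp a' b' (c + 1) z := by
  have ht₀ := hz.trans hzt
  have hta : |t| < 1 := abs_lt.2 ⟨by linarith, ht⟩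
  have hza : |z| < 1 := abs_lt.2 ⟨by linarith, by linarith⟩
  have hcross (i j : ℕ) (hij : i ≤ j) : hypCoeff a b c i * t ^ i * (hypCoeff a' b' c j * z ^ j) ≤
      hypCoeff a b c j * t ^ j * (hypCoeff a' b' c i * z ^ i) := by
    have hcoeff := hypCoeff_mul_hypCoeff_le ha hb ha' hb' hc hadd hmul hij
    have hpow : t ^ i * z ^ j ≤ t ^ j * z ^ i := by
      obtain ⟨k, rfl⟩ := Nat.exists_eq_add_of_le hij
      calc t ^ i * z ^ (i + k) = t ^ i * z ^ i * z ^ k := by ring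
        _ ≤ t ^ i * z ^ i * t ^ k := by gcongr
        _ = t ^ (i + k) * z ^ i := by ring
    rw [mul_mul_mul_comm, mul_mul_mul_comm (hypCoeff a b c j)]
    exact mul_le_mul hcoeff hpow (by positivity)
      (mul_pos (hypCoeff_pos ha hb hc j) (hypCoeff_pos ha' hb' hc i)).le
  have hanti : Antitone fun n : ℕ => c / (c + n) := fun i j hij =>
    div_le_div_of_nonneg_left hc.le (by positivity) (by simpa using hij)
  have hshift (a b x : ℝ) (n : ℕ) :
      hypCoeff a b (c + 1) n * x ^ n = hypCoeff a b c n * x ^ n * (c / (c + n)) := by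
    rw [hypCoeff_add_one_right a b hc, mul_right_comm]
  have hsum (a b) {x : ℝ} (hx : |x| < 1) :
      Summable fun n : ℕ => hypCoeff a b c n * x ^ n * (c / (c + n)) :=
    (summable_hypCoeff_mul_pow a b (c + 1) hx).congr (hshift a b x)
  have hcheb := tsum_mul_tsum_mul_le_of_antitone hcross hanti (summable_hypCoeff_mul_pow a b c hta)
    (summable_hypCoeff_mul_pow a' b' c hza) (hsum a b hta) (hsum a' b' hza)
  simpa only [← hshift, hyp_eq_tsum] using hcheb

theorem hasDerivAt_hyp_of_add_eq {a b c t : ℝ} (habc : a + b = c) (hc : 0 < c) (ht : |t| < 1) :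
    HasDerivAt (hyp a b c) (a * b / c * hyp a b (c + 1) t / (1 - t)) t := by
  have ht₁ : 1 - t ≠ 0 := (sub_pos.2 (abs_lt.1 ht).2).ne'
  refine (hasDerivAt_hyp a b c ht).congr_deriv ?_
  rw [eq_div_iff ht₁, mul_comm, one_sub_mul_hyp_add_one a b hc ht, ← habc]
  ring

theorem hasDerivAt_mul_hyp_one_sub {a b c v : ℝ} (habc : a + b + 1 = c) (hc : 0 < c)
    (hv : |1 - v| < 1) :
    HasDerivAt (fun v => v * hyp a b c (1 - v))
      (2 * hyp a b c (1 - v) - (a + 1) * (b + 1) / c * hyp a b (c + 1) (1 - v)) v := by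
  have hcontig := one_sub_mul_hyp_add_one a b hc hv
  refine ((hasDerivAt_id v).mul ((hasDerivAt_hyp a b c hv).comp_const_sub 1 v)).congr_deriv ?_
  rw [sub_sub_cancel, show a + b - c = -1 by linarith, show c - a = b + 1 by linarith,
    show c - b = a + 1 by linarith] at hcontig
  simp only [id_eq, one_mul, mul_neg]
  linear_combination -hcontig

/-! ### Comparison of hypergeometric functions -/

theorem abs_one_sub_lt_one {v : ℝ} (hv : v ∈ Ioc (0 : ℝ) 1) : |1 - v| < 1 :=
  abs_lt.2 ⟨by linarith [hv.2], by linarith [hv.1]⟩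

theorem rpow_mem_Ioc {v ρ : ℝ} (hv : v ∈ Ioc (0 : ℝ) 1) (hρ : 0 ≤ ρ) : v ^ ρ ∈ Ioc (0 : ℝ) 1 :=
  ⟨rpow_pos_of_pos hv.1 ρ, rpow_le_one hv.1.le hv.2 hρ⟩

theorem hasDerivAt_rpow_mul_hyp {a b c ρ v : ℝ} (habc : a + b + 1 = c) (hc : 0 < c) (hρ : 0 ≤ ρ)
    (hv : v ∈ Ioc (0 : ℝ) 1) :
    HasDerivAt (fun v => v ^ ρ * hyp a b c (1 - v ^ ρ))
      ((2 * hyp a b c (1 - v ^ ρ) - (a + 1) * (b + 1) / c * hyp a b (c + 1) (1 - v ^ ρ)) *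
        (ρ * v ^ (ρ - 1))) v :=
  (hasDerivAt_mul_hyp_one_sub habc hc (abs_one_sub_lt_one (rpow_mem_Ioc hv hρ))).comp
    (h := fun v => v ^ ρ) v
    (hasDerivAt_rpow_const (Or.inl hv.1.ne'))

section Comparison

variable {a b a' b' c ρ v : ℝ}

/-- After clearing denominators: the logarithmic derivative of `v * hyp a' b' c (1 - v)` is at most
that of its analogue with `v ^ ρ` in place of `v`. -/
theorem hyp_logDeriv_cross_mul_le (ha : 0 < a) (hb : 0 < b)
    (ha' : 0 < a') (hb' : 0 < b') (habc : a + b + 1 = c) (habc' : a' + b' + 1 = c)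
    (hmul : a' * b' ≤ a * b) (hρ : 1 ≤ ρ) (hρc : c - a' * b' ≤ ρ * (c - a * b))
    (hv : v ∈ Ioc (0 : ℝ) 1) :
    (2 * hyp a' b' c (1 - v) - (a' + 1) * (b' + 1) / c * hyp a' b' (c + 1) (1 - v)) *
        hyp a b c (1 - v ^ ρ) ≤
      ρ * (2 * hyp a b c (1 - v ^ ρ) -
        (a + 1) * (b + 1) / c * hyp a b (c + 1) (1 - v ^ ρ)) * hyp a' b' c (1 - v) := by
  have hc : 0 < c := by linarith
  have hvρ := rpow_mem_Ioc hv (zero_le_one.trans hρ)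
  have hvρ_le : v ^ ρ ≤ v := by
    simpa only [rpow_one] using rpow_le_rpow_of_exponent_ge hv.1 hv.2 hρ
  have hcross := hyp_add_one_mul_hyp_le ha hb ha' hb' hc (by linarith) hmul (sub_nonneg.2 hv.2)
    (sub_le_sub_left hvρ_le 1) (sub_lt_self 1 hvρ.1)
  have ht : 1 - v ∈ Ico (0 : ℝ) 1 := ⟨sub_nonneg.2 hv.2, sub_lt_self 1 hv.1⟩
  have hY := hyp_pos ha hb hc ⟨sub_nonneg.2 hvρ.2, sub_lt_self 1 hvρ.1⟩
  have hW' := hyp_pos ha' hb' (add_pos hc one_pos) ht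
  have hWY' := hyp_add_one_right_le ha' hb' hc ht
  set Y := hyp a b c (1 - v ^ ρ)
  set W := hyp a b (c + 1) (1 - v ^ ρ)
  set Y' := hyp a' b' c (1 - v)
  set W' := hyp a' b' (c + 1) (1 - v)
  have hκ : ρ * ((a + 1) * (b + 1) / c) - (a' + 1) * (b' + 1) / c ≤ 2 * ρ - 2 := by
    rw [← mul_div_assoc, ← sub_div, div_le_iff₀ hc]
    have hab : (a + 1) * (b + 1) = a * b + c := by linear_combination habc
    have hab' : (a' + 1) * (b' + 1) = a' * b' + c := by linear_combination habc'
    rw [hab, hab']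
    linarith
  have hW'_le : (ρ * ((a + 1) * (b + 1) / c) - (a' + 1) * (b' + 1) / c) * W' ≤ (2 * ρ - 2) * Y' :=
    mul_le_mul hκ hWY' hW'.le (by linarith)
  have hκρ : 0 ≤ ρ * ((a + 1) * (b + 1) / c) := by positivity
  linarith [mul_le_mul_of_nonneg_left hcross hκρ, mul_le_mul_of_nonneg_right hW'_le hY.le]

theorem rpow_mul_hyp_one_sub_rpow_le (ha : 0 < a) (hb : 0 < b)
    (ha' : 0 < a') (hb' : 0 < b') (habc : a + b + 1 = c) (habc' : a' + b' + 1 = c)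
    (hmul : a' * b' ≤ a * b) (hρ : 1 ≤ ρ) (hρc : c - a' * b' ≤ ρ * (c - a * b))
    (hv : v ∈ Ioc (0 : ℝ) 1) :
    v ^ ρ * hyp a b c (1 - v ^ ρ) ≤ v * hyp a' b' c (1 - v) := by
  have hc : 0 < c := by linarith
  have hρ₀ : 0 ≤ ρ := zero_le_one.trans hρ
  have hpos {u : ℝ} (hu : u ∈ Ioc (0 : ℝ) 1) : 0 < u * hyp a' b' c (1 - u) :=
    mul_pos hu.1 (hyp_pos ha' hb' hc ⟨sub_nonneg.2 hu.2, sub_lt_self 1 hu.1⟩)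
  have hderiv {u : ℝ} (hu : u ∈ Ioc (0 : ℝ) 1) :=
    (hasDerivAt_rpow_mul_hyp habc hc hρ₀ hu).div
      (hasDerivAt_mul_hyp_one_sub habc' hc (abs_one_sub_lt_one hu)) (hpos hu).ne'
  have hmono : MonotoneOn ((fun u => u ^ ρ * hyp a b c (1 - u ^ ρ)) /
      fun u => u * hyp a' b' c (1 - u)) (Ioc 0 1) := by
    refine monotoneOn_of_deriv_nonneg (convex_Ioc 0 1)
      (fun u hu => (hderiv hu).continuousAt.continuousWithinAt)
      (fun u hu => (hderiv (interior_subset hu)).differentiableAt.differentiableWithinAt)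
      fun u hu => ?_
    replace hu := interior_subset hu
    rw [(hderiv hu).deriv]
    have hnum := mul_le_mul_of_nonneg_left
      (hyp_logDeriv_cross_mul_le ha hb ha' hb' habc habc' hmul hρ hρc hu)
      (rpow_pos_of_pos hu.1 ρ).le
    refine div_nonneg ((sub_nonneg.2 hnum).trans_eq ?_) (sq_nonneg _)
    have hu₀ := hu.1.ne'
    rw [rpow_sub_one hu₀]
    field_simp
  have hle := hmono hv (right_mem_Ioc.2 one_pos) hv.2
  simpa [hyp_zero, div_le_one (hpos hv)] using hle

end Comparison

/-! ### Convexity of the difference -/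

/-- The numerator of `G` in the variable `v = x ^ c`, for general hypergeometric parameters and
exponent ratio `ρ = d / c`. -/
noncomputable def hypDiff (a b a' b' c ρ v : ℝ) : ℝ :=
  hyp a b c (1 - v ^ ρ) - hyp a' b' c (1 - v)

section HypDiff

variable {a b a' b' c ρ v : ℝ}

theorem hypDiff_one (a b a' b' c ρ : ℝ) : hypDiff a b a' b' c ρ 1 = 0 := by
  simp [hypDiff, hyp_zero]

theorem hasDerivAt_hypDiff (a b a' b' c : ℝ) (hρ : 0 ≤ ρ) (hv : v ∈ Ioc (0 : ℝ) 1) :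
    HasDerivAt (hypDiff a b a' b' c ρ)
      (a' * b' / c * hyp (a' + 1) (b' + 1) (c + 1) (1 - v) - a * b / c *
        (ρ * v ^ (ρ - 1) * hyp (a + 1) (b + 1) (c + 1) (1 - v ^ ρ))) v := by
  have hpow : HasDerivAt (fun v : ℝ => 1 - v ^ ρ) (-(ρ * v ^ (ρ - 1))) v :=
    (hasDerivAt_rpow_const (Or.inl hv.1.ne')).const_sub 1
  refine (((hasDerivAt_hyp a b c (abs_one_sub_lt_one (rpow_mem_Ioc hv hρ))).comp v hpow).sub
    ((hasDerivAt_hyp a' b' c (abs_one_sub_lt_one hv)).comp_const_sub 1 v)).congr_deriv ?_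
  ring

theorem hasDerivAt_deriv_hypDiff (habc : a + b + 1 = c) (habc' : a' + b' + 1 = c) (hc : 0 < c)
    (hρ : 0 ≤ ρ) (hv : v ∈ Ioo (0 : ℝ) 1) :
    HasDerivAt (deriv (hypDiff a b a' b' c ρ))
      ((-(a' * b') * ((a' + 1) * (b' + 1)) * hyp (a' + 1) (b' + 1) (c + 1 + 1) (1 - v) -
        a * b * ρ * v ^ (ρ - 1) * ((ρ - 1) * (c + 1) * hyp (a + 1) (b + 1) (c + 1) (1 - v ^ ρ) -
          ρ * ((a + 1) * (b + 1)) * hyp (a + 1) (b + 1) (c + 1 + 1) (1 - v ^ ρ))) /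
        (c * (c + 1) * v)) v := by
  have hc₁ : 0 < c + 1 := add_pos hc one_pos
  have hv' := Ioo_subset_Ioc_self hv
  have hv₀ := hv.1.ne'
  have hvρ := rpow_mem_Ioc hv' hρ
  have := hvρ.1.ne'
  have hderiv : deriv (hypDiff a b a' b' c ρ) =ᶠ[𝓝 v] fun v =>
      a' * b' / c * hyp (a' + 1) (b' + 1) (c + 1) (1 - v) - a * b / c *
        (ρ * v ^ (ρ - 1) * hyp (a + 1) (b + 1) (c + 1) (1 - v ^ ρ)) := by
    filter_upwards [Ioo_mem_nhds hv.1 hv.2] with u hu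
    exact (hasDerivAt_hypDiff a b a' b' c hρ (Ioo_subset_Ioc_self hu)).deriv
  have hpow : HasDerivAt (fun v : ℝ => 1 - v ^ ρ) (-(ρ * v ^ (ρ - 1))) v :=
    (hasDerivAt_rpow_const (Or.inl hv₀)).const_sub 1
  have hX := (hasDerivAt_hyp_of_add_eq (a := a + 1) (b := b + 1) (by linarith) hc₁
    (abs_one_sub_lt_one hvρ)).comp v hpow
  have hX' := (hasDerivAt_hyp_of_add_eq (a := a' + 1) (b := b' + 1) (by linarith) hc₁
    (abs_one_sub_lt_one hv')).comp_const_sub 1 v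
  have hweight : HasDerivAt (fun v : ℝ => ρ * v ^ (ρ - 1)) (ρ * ((ρ - 1) * v ^ (ρ - 1 - 1))) v :=
    (hasDerivAt_rpow_const (Or.inl hv₀)).const_mul ρ
  refine (((hX'.const_mul (a' * b' / c)).sub
    ((hweight.mul hX).const_mul (a * b / c))).congr_of_eventuallyEq hderiv).congr_deriv ?_
  simp only [sub_sub_cancel, rpow_sub_one hv₀, Function.comp_apply]
  field_simp
  ring

theorem deriv_deriv_hypDiff_pos (ha : -1 < a) (hb : -1 < b) (ha' : -1 < a') (hb' : -1 < b')
    (habc : a + b + 1 = c) (habc' : a' + b' + 1 = c) (hc : 0 < c) (hab : a * b < 0)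
    (hmul : a' * b' ≤ a * b) (hρ : 1 < ρ) (hρab : 2 - a' * b' ≤ ρ * (2 - a * b))
    (hdisc : -(a * b) * ρ * (c + 1 - ρ * (1 - a * b)) ≤ -(a' * b') * ((a' + 1) * (b' + 1)))
    (hv : v ∈ Ioo (0 : ℝ) 1) : 0 < deriv (deriv (hypDiff a b a' b' c ρ)) v := by
  have hρ₀ : 0 < ρ := zero_lt_one.trans hρ
  have hvρ : v ^ ρ ∈ Ioo (0 : ℝ) 1 :=
    ⟨rpow_pos_of_pos hv.1 ρ, rpow_lt_one hv.1.le hv.2 hρ₀⟩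
  have hc₁ : 0 < c + 1 := add_pos hc one_pos
  rw [neg_lt_iff_pos_add] at ha hb ha' hb'
  have hprod : (a + 1) * (b + 1) = c + a * b := by linear_combination habc
  have hprod' : (a' + 1) * (b' + 1) = c + a' * b' := by linear_combination habc'
  have hYX := hyp_add_one_right_lt ha hb hc₁ (t := 1 - v ^ ρ)
    ⟨sub_pos.2 hvρ.2, sub_lt_self 1 hvρ.1⟩
  have hY' := hyp_pos ha' hb' (add_pos hc₁ one_pos) (t := 1 - v)
    ⟨sub_nonneg.2 hv.2.le, sub_lt_self 1 hv.1⟩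
  have hYY' : v ^ (ρ - 1) * hyp (a + 1) (b + 1) (c + 1 + 1) (1 - v ^ ρ) ≤
      hyp (a' + 1) (b' + 1) (c + 1 + 1) (1 - v) := by
    have hle := rpow_mul_hyp_one_sub_rpow_le ha hb ha' hb' (c := c + 1 + 1) (by linarith)
      (by linarith) (by linarith) hρ.le (by rw [hprod, hprod']; linarith) (Ioo_subset_Ioc_self hv)
    rwa [rpow_sub_one hv.1.ne', div_mul_eq_mul_div, div_le_iff₀' hv.1]
  rw [(hasDerivAt_deriv_hypDiff habc habc' hc hρ₀.le hv).deriv]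
  refine div_pos ?_ (mul_pos (mul_pos hc hc₁) hv.1)
  have hw : 0 < -(a * b) * ρ * v ^ (ρ - 1) :=
    mul_pos (mul_pos (neg_pos.2 hab) hρ₀) (rpow_pos_of_pos hv.1 _)
  have hstrict := mul_lt_mul_of_pos_left hYX
    (mul_pos hw (mul_pos (sub_pos.2 hρ) hc₁))
  set X := hyp (a + 1) (b + 1) (c + 1) (1 - v ^ ρ)
  set Y := hyp (a + 1) (b + 1) (c + 1 + 1) (1 - v ^ ρ)
  set Y' := hyp (a' + 1) (b' + 1) (c + 1 + 1) (1 - v)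
  have hY : 0 ≤ v ^ (ρ - 1) * Y :=
    (mul_pos (rpow_pos_of_pos hv.1 _)
      (hyp_pos ha hb (add_pos hc₁ one_pos) ⟨sub_nonneg.2 hvρ.2.le, sub_lt_self 1 hvρ.1⟩)).le
  have hbound := mul_le_mul hdisc hYY' hY
    (mul_pos (neg_pos.2 (hmul.trans_lt hab)) (mul_pos ha' hb')).le
  rw [hprod]
  linarith

theorem strictConvexOn_hypDiff (ha : -1 < a) (hb : -1 < b) (ha' : -1 < a') (hb' : -1 < b')
    (habc : a + b + 1 = c) (habc' : a' + b' + 1 = c) (hc : 0 < c) (hab : a * b < 0)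
    (hmul : a' * b' ≤ a * b) (hρ : 1 < ρ) (hρab : 2 - a' * b' ≤ ρ * (2 - a * b))
    (hdisc : -(a * b) * ρ * (c + 1 - ρ * (1 - a * b)) ≤ -(a' * b') * ((a' + 1) * (b' + 1))) :
    StrictConvexOn ℝ (Ioc 0 1) (hypDiff a b a' b' c ρ) := by
  refine strictConvexOn_of_deriv2_pos (convex_Ioc 0 1) (fun v hv => ?_) fun v hv => ?_
  · exact (hasDerivAt_hypDiff a b a' b' c (zero_le_one.trans hρ.le)
      hv).continuousAt.continuousWithinAt
  · rw [interior_Ioc] at hv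
    exact deriv_deriv_hypDiff_pos ha hb ha' hb' habc habc' hc hab hmul hρ hρab hdisc hv

theorem strictAntiOn_hypDiff_div (ha : -1 < a) (hb : -1 < b) (ha' : -1 < a') (hb' : -1 < b')
    (habc : a + b + 1 = c) (habc' : a' + b' + 1 = c) (hc : 0 < c) (hab : a * b < 0)
    (hmul : a' * b' ≤ a * b) (hρ : 1 < ρ) (hρab : 2 - a' * b' ≤ ρ * (2 - a * b))
    (hdisc : -(a * b) * ρ * (c + 1 - ρ * (1 - a * b)) ≤ -(a' * b') * ((a' + 1) * (b' + 1))) :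
    StrictAntiOn (fun v => hypDiff a b a' b' c ρ v / (1 - v)) (Ioo 0 1) := by
  intro v hv w hw hvw
  have hsecant := (strictConvexOn_hypDiff ha hb ha' hb' habc habc' hc hab hmul hρ hρab
    hdisc).secant_strict_mono (right_mem_Ioc.2 one_pos) (Ioo_subset_Ioc_self hv)
    (Ioo_subset_Ioc_self hw) hv.2.ne hw.2.ne hvw
  rw [hypDiff_one, sub_zero, sub_zero, ← neg_sub 1 v, ← neg_sub 1 w, div_neg, div_neg] at hsecant
  exact neg_lt_neg_iff.1 hsecant

theorem tendsto_hypDiff_div_one (a b a' b' c : ℝ) (hρ : 0 ≤ ρ) :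
    Tendsto (fun v => hypDiff a b a' b' c ρ v / (1 - v)) (𝓝[<] 1)
      (𝓝 ((ρ * (a * b) - a' * b') / c)) := by
  have hslope := ((hasDerivAt_hypDiff a b a' b' c hρ
    (right_mem_Ioc.2 one_pos)).tendsto_slope.mono_left (nhdsLT_le_nhdsNE 1)).neg
  convert hslope using 2 with v
  · rw [slope_def_field, hypDiff_one, sub_zero, ← neg_sub 1 v, div_neg, neg_neg]
  · simp only [one_rpow, sub_self, hyp_zero]
    ring

end HypDiff

/-! ### Limits and images -/

theorem tendsto_hypCoeff {a b c : ℝ} (habc : a + b = c + 1) (ha : Gamma a ≠ 0)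
    (hb : Gamma b ≠ 0) :
    Tendsto (hypCoeff a b c) atTop (𝓝 (Gamma c / (Gamma a * Gamma b))) := by
  have hlim : Tendsto (fun n : ℕ => Real.GammaSeq c n / (Real.GammaSeq a n * Real.GammaSeq b n) *
      ((n : ℝ) / (n + 1))) atTop (𝓝 (Gamma c / (Gamma a * Gamma b) * 1)) :=
    ((Real.GammaSeq_tendsto_Gamma c).div ((Real.GammaSeq_tendsto_Gamma a).mul
      (Real.GammaSeq_tendsto_Gamma b)) (mul_ne_zero ha hb)).mul (tendsto_natCast_div_add_atTop 1)
  rw [← tendsto_add_atTop_iff_nat 1]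
  refine (mul_one (Gamma c / _) ▸ hlim).congr' ?_
  filter_upwards [eventually_gt_atTop 0] with n hn
  have hn : (0 : ℝ) < n := Nat.cast_pos.2 hn
  have hpow : (n : ℝ) ^ a * (n : ℝ) ^ b = (n : ℝ) ^ c * n := by
    rw [← rpow_add hn, habc, rpow_add_one hn.ne']
  have hne (x : ℝ) : (n : ℝ) ^ x ≠ 0 := (rpow_pos_of_pos hn x).ne'
  have hb_pow : (n : ℝ) ^ b = (n : ℝ) ^ c * n / (n : ℝ) ^ a := by
    rw [← hpow, mul_div_cancel_left₀ _ (hne a)]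
  have := hne a
  have := hne c
  rw [hypCoeff, Nat.factorial_succ, Nat.cast_mul, Nat.cast_succ]
  simp only [Real.GammaSeq, hb_pow]
  field_simp

theorem tendsto_hyp_one {a b c : ℝ} (habc : a + b + 1 = c) (hc : 0 < c) (ha : 0 < a + 1)
    (hb : 0 < b + 1) :
    Tendsto (hyp a b c) (𝓝[<] 1) (𝓝 (1 / (c * betaFn (a + 1) (b + 1)))) := by
  have hcoeff := tendsto_hypCoeff (c := c) (by linarith) (Gamma_pos_of_pos ha).ne'
    (Gamma_pos_of_pos hb).ne'
  have hsum : Tendsto (fun n => ∑ k ∈ Finset.range n, hypCoeff a b c k) atTop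
      (𝓝 (Gamma c / (Gamma (a + 1) * Gamma (b + 1)))) := by
    rw [← tendsto_add_atTop_iff_nat 1]
    exact hcoeff.congr fun n => (sum_range_hypCoeff habc hc n).symm
  have hbeta : 1 / (c * betaFn (a + 1) (b + 1)) =
      Gamma c / (Gamma (a + 1) * Gamma (b + 1)) := by
    rw [betaFn, show a + 1 + (b + 1) = c + 1 by linarith, Gamma_add_one hc.ne']
    have := hc.ne'
    have := (Gamma_pos_of_pos hc).ne'
    field_simp
  rw [hbeta]
  exact Real.tendsto_tsum_powerSeries_nhdsWithin_lt hsum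

theorem tendsto_rpow_nhdsGT_zero {r : ℝ} (hr : 0 < r) :
    Tendsto (fun x : ℝ => x ^ r) (𝓝[>] 0) (𝓝[>] 0) := by
  refine tendsto_nhdsWithin_iff.2 ⟨?_, ?_⟩
  · exact ((continuous_rpow_const hr.le).tendsto' 0 0 (zero_rpow hr.ne')).mono_left
      nhdsWithin_le_nhds
  · filter_upwards [self_mem_nhdsWithin] with x hx using rpow_pos_of_pos hx r

theorem tendsto_rpow_nhdsLT_one {r : ℝ} (hr : 0 < r) :
    Tendsto (fun x : ℝ => x ^ r) (𝓝[<] 1) (𝓝[<] 1) := by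
  refine tendsto_nhdsWithin_iff.2 ⟨?_, ?_⟩
  · exact ((continuous_rpow_const hr.le).tendsto' 1 1 (one_rpow r)).mono_left nhdsWithin_le_nhds
  · filter_upwards [Ioo_mem_nhdsLT one_pos] with x hx using rpow_lt_one hx.1.le hx.2 hr

theorem tendsto_hypDiff_div_zero {a b a' b' c ρ : ℝ} (ha : -1 < a) (hb : -1 < b) (ha' : -1 < a')
    (hb' : -1 < b') (habc : a + b + 1 = c) (habc' : a' + b' + 1 = c) (hc : 0 < c) (hρ : 0 < ρ) :
    Tendsto (fun v => hypDiff a b a' b' c ρ v / (1 - v)) (𝓝[>] 0)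
      (𝓝 (1 / (c * betaFn (a + 1) (b + 1)) - 1 / (c * betaFn (a' + 1) (b' + 1)))) := by
  rw [neg_lt_iff_pos_add] at ha hb ha' hb'
  have hsub : Tendsto (fun v : ℝ => 1 - v) (𝓝[>] 0) (𝓝[<] 1) := by
    refine tendsto_nhdsWithin_iff.2 ⟨?_, ?_⟩
    · exact ((continuous_sub_left 1).tendsto' 0 1 (sub_zero 1)).mono_left nhdsWithin_le_nhds
    · filter_upwards [self_mem_nhdsWithin] with v hv using sub_lt_self (1 : ℝ) hv
  have hdiff := ((tendsto_hyp_one habc hc ha hb).comp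
    (hsub.comp (tendsto_rpow_nhdsGT_zero hρ))).sub ((tendsto_hyp_one habc' hc ha' hb').comp hsub)
  have hquot := hdiff.div (hsub.mono_right nhdsWithin_le_nhds) one_ne_zero
  rw [div_one] at hquot
  exact hquot

theorem image_Ioo_eq_of_strictAntiOn_of_tendsto {f : ℝ → ℝ} {a b l m : ℝ} (hab : a < b)
    (hf : StrictAntiOn f (Ioo a b)) (hcont : ContinuousOn f (Ioo a b))
    (ha : Tendsto f (𝓝[>] a) (𝓝 m)) (hb : Tendsto f (𝓝[<] b) (𝓝 l)) :
    f '' Ioo a b = Ioo l m := by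
  apply Subset.antisymm
  · rintro _ ⟨x, hx, rfl⟩
    obtain ⟨y, hay, hyx⟩ := exists_between hx.1
    obtain ⟨z, hxz, hzb⟩ := exists_between hx.2
    have hy : y ∈ Ioo a b := ⟨hay, hyx.trans hx.2⟩
    have hz : z ∈ Ioo a b := ⟨hx.1.trans hxz, hzb⟩
    constructor
    · refine (le_of_tendsto hb ?_).trans_lt (hf hx hz hxz)
      filter_upwards [Ioo_mem_nhdsLT hzb] with w hw
      exact (hf hz ⟨hz.1.trans hw.1, hw.2⟩ hw.1).le
    · refine (hf hy hx hyx).trans_le (ge_of_tendsto ha ?_)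
      filter_upwards [Ioo_mem_nhdsGT hay] with w hw
      exact (hf ⟨hw.1, hw.2.trans hy.2⟩ hy hw.2).le
  · have := nhdsLT_neBot_of_exists_lt ⟨a, hab⟩
    have := nhdsGT_neBot_of_exists_gt ⟨b, hab⟩
    exact isPreconnected_Ioo.intermediate_value_Ioo (le_principal_iff.2 (Ioo_mem_nhdsLT hab))
      (le_principal_iff.2 (Ioo_mem_nhdsGT hab)) hcont hb ha

theorem image_rpow_Ioo_zero_one {r : ℝ} (hr : 0 < r) :
    (fun x : ℝ => x ^ r) '' Ioo 0 1 = Ioo 0 1 := by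
  have himage := ContinuousOn.image_Ioo_of_strictMonoOn zero_le_one
    (continuous_rpow_const hr.le).continuousOn
    ((strictMonoOn_rpow_Ici_of_exponent_pos hr).mono Icc_subset_Ici_self)
  rwa [zero_rpow hr.ne', one_rpow] at himage

theorem strictAntiOn_comp_rpow {f : ℝ → ℝ} {r : ℝ} (hr : 0 < r) (hf : StrictAntiOn f (Ioo 0 1)) :
    StrictAntiOn (f ∘ fun x => x ^ r) (Ioo 0 1) :=
  hf.comp_strictMonoOn ((strictMonoOn_rpow_Ici_of_exponent_pos hr).mono fun _ hx => hx.1.le)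
    (mapsTo_iff_image_subset.2 (image_rpow_Ioo_zero_one hr).subset)

theorem image_hypDiff_div {a b a' b' c ρ l m : ℝ} (hρ : 0 ≤ ρ)
    (hanti : StrictAntiOn (fun v => hypDiff a b a' b' c ρ v / (1 - v)) (Ioo 0 1))
    (h₀ : Tendsto (fun v => hypDiff a b a' b' c ρ v / (1 - v)) (𝓝[>] 0) (𝓝 m))
    (h₁ : Tendsto (fun v => hypDiff a b a' b' c ρ v / (1 - v)) (𝓝[<] 1) (𝓝 l)) :
    (fun v => hypDiff a b a' b' c ρ v / (1 - v)) '' Ioo 0 1 = Ioo l m := by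
  refine image_Ioo_eq_of_strictAntiOn_of_tendsto one_pos hanti (fun v hv => ?_) h₀ h₁
  exact ((hasDerivAt_hypDiff a b a' b' c hρ (Ioo_subset_Ioc_self hv)).continuousAt.div
    (by fun_prop) (sub_ne_zero.2 hv.2.ne')).continuousWithinAt

theorem hypDiff_rpow (a b a' b' c : ℝ) {r s x : ℝ} (hr : r ≠ 0) (hx : 0 ≤ x) :
    hypDiff a b a' b' c (s / r) (x ^ r) = hyp a b c (1 - x ^ s) - hyp a' b' c (1 - x ^ r) := by
  rw [hypDiff, ← rpow_mul hx, mul_div_cancel₀ _ hr]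

/-! ### Parameters -/

section Parameters

variable {α β p m ρ x : ℝ}

theorem mul_sq_div_sub_le_mul (hα : 0 < α) (hβ : 0 < β) (hxβ : x ≤ β)
    (h : √3 * β ≤ α ∨ (α + β) ^ 4 ≤ 4 * (α * β) * (α + 2 * β) ^ 2) :
    x * ((α + β) ^ 2 / (α + 2 * β) - x) ≤ α * β := by
  set σ := (α + β) ^ 2 / (α + 2 * β) with hσ
  rcases h with hlarge | hdisc
  · have hsq : 3 * β ^ 2 ≤ α ^ 2 := by
      simpa only [mul_pow, sq_sqrt zero_le_three] using pow_le_pow_left₀ (by positivity) hlarge 2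
    have hσ_ge : 2 * β ≤ σ := by
      rw [hσ, le_div_iff₀ (by positivity)]
      linarith
    have hσ_le : σ ≤ α + β := by
      rw [hσ, div_le_iff₀ (by positivity)]
      nlinarith [mul_pos hα hβ]
    calc x * (σ - x) = β * (σ - β) - (β - x) * (σ - β - x) := by ring
      _ ≤ β * (σ - β) := sub_le_self _ (mul_nonneg (by linarith) (by linarith))
      _ ≤ β * α := by gcongr; linarith
      _ = α * β := mul_comm _ _
  · have hσ_sq : σ ^ 2 ≤ 4 * (α * β) := by
      rw [hσ, div_pow, div_le_iff₀ (by positivity)]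
      linarith
    linarith [sq_nonneg (σ - 2 * x)]

theorem one_lt_of_mul_add_le_mul_add (hβ : 0 < β) (hp : 0 < p)
    (hρ : β * (p + 1) + p ≤ ρ * (β + p)) : 1 < ρ := by
  have hlt : 1 * (β + p) < β * (p + 1) + p := by linarith [mul_pos hβ hp]
  exact lt_of_mul_lt_mul_right (hlt.trans_le hρ) (by positivity)

theorem two_add_le_two_mul_of_mul_add_le_mul_add (hβ : 0 < β) (hβp : β ≤ p)
    (hρ : β * (p + 1) + p ≤ ρ * (β + p)) : 2 + β ≤ 2 * ρ := by
  have hle : (2 + β) * (β + p) ≤ 2 * (β * (p + 1) + p) := by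
    linarith [mul_le_mul_of_nonneg_left hβp hβ.le]
  exact le_of_mul_le_mul_right (by linarith) (show 0 < β + p by linarith)

theorem mul_mul_sub_le_mul (hα : 0 < α) (hβ : 0 < β) (hp : p = α + β)
    (h : √3 * β ≤ α ∨ p ^ 4 ≤ 4 * (α * β * (p + β)) * (β + p))
    (hρ : β * (p + 1) + p ≤ ρ * (β + p)) (hm : 0 ≤ m * ρ) (hmρ : m * ρ ≤ β) :
    m * ρ * (p + 1 - ρ * (1 + m)) ≤ α * β := by
  have hσ : p + 1 - ρ ≤ (α + β) ^ 2 / (α + 2 * β) := by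
    rw [le_div_iff₀ (by positivity)]
    subst hp
    linarith
  have hquad := mul_sq_div_sub_le_mul hα hβ hmρ (h.imp_right fun h => by
    subst hp
    linarith)
  calc m * ρ * (p + 1 - ρ * (1 + m)) = m * ρ * (p + 1 - ρ - m * ρ) := by ring
    _ ≤ m * ρ * ((α + β) ^ 2 / (α + 2 * β) - m * ρ) := by gcongr
    _ ≤ α * β := hquad

theorem half_add_sqrt_lt_zero {a b t : ℝ} (ha : a < 1) (hb : 0 < b) (ht : t < 1) :
    ((a - b - 1) + √((a + b - 1) ^ 2 + 4 * (b * (1 - a)) * t)) / 2 < 0 := by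
  have hsqrt : √((a + b - 1) ^ 2 + 4 * (b * (1 - a)) * t) < 1 - a + b := by
    rw [sqrt_lt' (by linarith)]
    linarith [mul_lt_mul_of_pos_left ht (mul_pos hb (sub_pos.2 ha))]
  linarith

theorem neg_mul_le_of_le_half_add_sqrt {a b t δ : ℝ} (hδa : a - 1 < δ) (hδb : -b < δ)
    (hδ : δ ≤ ((a - b - 1) + √((a + b - 1) ^ 2 + 4 * (b * (1 - a)) * t)) / 2) :
    -((a - 1 - δ) * (b + δ)) ≤ b * (1 - a) * t := by
  have hsq : (2 * δ - (a - b - 1)) ^ 2 ≤ (a + b - 1) ^ 2 + 4 * (b * (1 - a)) * t :=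
    (le_sqrt' (by linarith)).1 (by linarith)
  linarith

end Parameters

section Quotient

variable {a b c d δ ρ : ℝ}

theorem strictAntiOn_hypDiff_sub_add_div {α β p : ℝ} (ha : a ∈ Ioo (0 : ℝ) 1) (hb : 0 < b)
    (hα : α = a * (b + 1)) (hβ : β = b * (1 - a)) (hp : p = a + b)
    (hcase : √3 * β ≤ α ∨ p ^ 4 ≤ 4 * (α * β * (p + β)) * (β + p))
    (hρ : β * (p + 1) + p ≤ ρ * (β + p))
    (hδa : a - 1 < δ) (hδb : -b < δ) (hδ : δ < 0) (hδρ : -((a - 1 - δ) * (b + δ)) * ρ ≤ β) :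
    StrictAntiOn (fun v => hypDiff (a - 1 - δ) (b + δ) (a - 1) b p ρ v / (1 - v)) (Ioo 0 1) := by
  obtain ⟨ha₀, ha₁⟩ := ha
  have hα₀ : 0 < α := by rw [hα]; positivity
  have hβ₀ : 0 < β := by rw [hβ]; exact mul_pos hb (sub_pos.2 ha₁)
  have hp_add : p = α + β := by rw [hp, hα, hβ]; ring
  have hρ₁ := one_lt_of_mul_add_le_mul_add hβ₀ (hp_add ▸ add_pos hα₀ hβ₀) hρ
  have hm : 0 < -((a - 1 - δ) * (b + δ)) := by
    rw [← neg_mul]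
    exact mul_pos (by linarith) (by linarith)
  have hβ_eq : (a - 1) * b = -β := by rw [hβ]; ring
  have hα_eq : (a - 1 + 1) * (b + 1) = α := by rw [hα]; ring
  refine strictAntiOn_hypDiff_div (by linarith) (by linarith) (by linarith) (by linarith)
    (by linarith) (by linarith) (by linarith) (neg_pos.1 hm) ?_ hρ₁ ?_ ?_
  · rw [hβ_eq]
    linarith [le_mul_of_one_le_right hm.le hρ₁.le]
  · rw [hβ_eq]
    linarith [two_add_le_two_mul_of_mul_add_le_mul_add hβ₀ (by linarith) hρ,
      mul_pos hm (zero_lt_one.trans hρ₁)]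
  · rw [hβ_eq, hα_eq, neg_neg, mul_comm β, sub_eq_add_neg 1]
    exact mul_mul_sub_le_mul hα₀ hβ₀ hp_add hcase hρ
      (mul_pos hm (zero_lt_one.trans hρ₁)).le hδρ

theorem tendsto_hypDiff_sub_add_div_zero (ha : 0 < a) (hb : 0 < b) (hδa : δ < a)
    (hδb : -(b + 1) < δ) (hρ : 0 < ρ) :
    Tendsto (fun v => hypDiff (a - 1 - δ) (b + δ) (a - 1) b (a + b) ρ v / (1 - v)) (𝓝[>] 0)
      (𝓝 (1 / ((a + b) * betaFn (a - δ) (b + 1 + δ)) - 1 / ((a + b) * betaFn a (b + 1)))) := by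
  convert tendsto_hypDiff_div_zero (c := a + b) _ _ _ _ _ _ (add_pos ha hb) hρ using 6 <;> linarith

theorem tendsto_hypDiff_sub_add_div_one (hab : a + b ≠ 0) (hc : 0 < c) (hd : 0 < d) :
    Tendsto (fun v => hypDiff (a - 1 - δ) (b + δ) (a - 1) b (a + b) (d / c) v / (1 - v)) (𝓝[<] 1)
      (𝓝 (d / ((a + b) * c) * ((c / d - 1) * (b * (1 - a)) + (a - b - 1) * δ - δ ^ 2))) := by
  convert tendsto_hypDiff_div_one (a - 1 - δ) (b + δ) (a - 1) b (a + b) (div_pos hd hc).le using 2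
  field_simp
  ring

end Quotient

theorem stmt0_general (a b c d δ δ₁ α β p h k : ℝ)
    (ha : a ∈ Ioo (0 : ℝ) 1) (hb : 0 < b)
    (hα : α = a * (b + 1)) (hβ : β = b * (1 - a)) (hp : p = a + b)
    (hh : h = α * β * (p + β)) (hk : k = β * (p + 1) + p)
    (hcase : √3 * β ≤ α ∨ p ^ 4 ≤ 4 * h * (β + p))
    (hc : 0 < c) (hd : 0 < d) (hcd : c / d ≤ (β + p) / k)
    (hδ₁ : δ₁ = ((a - b - 1) + √((p - 1) ^ 2 + 4 * β * (c / d))) / 2)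
    (hδ : δ ∈ Ioc (max (a - 1) (-b)) δ₁) :
    let G : ℝ → ℝ := fun x =>
      (hyp (a - 1 - δ) (b + δ) p (1 - x ^ d) - hyp (a - 1) b p (1 - x ^ c)) / (1 - x ^ c)
    let C₁ : ℝ := d / (p * c) * ((c / d - 1) * β + (a - b - 1) * δ - δ ^ 2)
    let C₂ : ℝ := 1 / (p * betaFn (a - δ) (b + 1 + δ)) - 1 / (p * betaFn a (b + 1))
    δ₁ < 0 ∧
      StrictAntiOn G (Ioo 0 1) ∧
      Tendsto G (𝓝[>] 0) (𝓝 C₂) ∧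
      Tendsto G (𝓝[<] 1) (𝓝 C₁) ∧
      0 ≤ C₁ ∧
      G '' Ioo 0 1 = Ioo C₁ C₂ := by
  intro G C₁ C₂
  obtain ⟨⟨hδa, hδb⟩, hδ⟩ : (a - 1 < δ ∧ -b < δ) ∧ δ ≤ δ₁ := ⟨max_lt_iff.1 hδ.1, hδ.2⟩
  have hp₀ : 0 < p := by rw [hp]; exact add_pos ha.1 hb
  have hβ₀ : 0 < β := by rw [hβ]; exact mul_pos hb (sub_pos.2 ha.2)
  have hρ₀ : 0 < d / c := div_pos hd hc
  subst hk
  have hρk : β * (p + 1) + p ≤ d / c * (β + p) := by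
    rw [div_mul_eq_mul_div, le_div_iff₀ hc]
    rw [div_le_div_iff₀ hd (by positivity)] at hcd
    linarith
  have hρ₁ := one_lt_of_mul_add_le_mul_add hβ₀ hp₀ hρk
  subst hβ hp hh
  have hδ₁_neg : δ₁ < 0 :=
    hδ₁ ▸ half_add_sqrt_lt_zero ha.2 hb ((div_lt_one hd).2 ((one_lt_div hc).1 hρ₁))
  have hδt := neg_mul_le_of_le_half_add_sqrt hδa hδb (hδ₁ ▸ hδ)
  have hanti := strictAntiOn_hypDiff_sub_add_div ha hb hα rfl rfl hcase hρk hδa hδb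
    (hδ.trans_lt hδ₁_neg) (by rwa [← le_div_iff₀ hρ₀, div_div_eq_mul_div, mul_div_assoc])
  have h₀ := tendsto_hypDiff_sub_add_div_zero ha.1 hb (δ := δ) (by linarith [ha.1]) (by linarith)
    hρ₀
  have h₁ := tendsto_hypDiff_sub_add_div_one (δ := δ) hp₀.ne' hc hd
  have hG : EqOn ((fun v => hypDiff (a - 1 - δ) (b + δ) (a - 1) b (a + b) (d / c) v / (1 - v)) ∘
      fun x => x ^ c) G (Ioo 0 1) := fun x hx => by
    rw [Function.comp_apply, hypDiff_rpow _ _ _ _ _ hc.ne' hx.1.le]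
  refine ⟨hδ₁_neg, ?_, ?_, ?_, mul_nonneg (by positivity) (by linarith), ?_⟩
  · exact (strictAntiOn_comp_rpow hc hanti).congr hG
  · exact (h₀.comp (tendsto_rpow_nhdsGT_zero hc)).congr'
      (hG.eventuallyEq_of_mem (Ioo_mem_nhdsGT one_pos))
  · exact (h₁.comp (tendsto_rpow_nhdsLT_one hc)).congr'
      (hG.eventuallyEq_of_mem (Ioo_mem_nhdsLT one_pos))
  · rw [← hG.image_eq, image_comp, image_rpow_Ioo_zero_one hc, image_hypDiff_div hρ₀.le hanti h₀ h₁]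

theorem stmt0 (a b c d δ δ₁ α β p h k : ℝ)
    (ha : a ∈ Ioo (0:ℝ) 1) (hb : 1 - a ≤ b)
    (hα : α = a * (b + 1)) (hβ : β = b * (1 - a)) (hp : p = a + b)
    (hh : h = α * β * (p + β)) (hk : k = β * (p + 1) + p)
    (hcase : α ≥ Real.sqrt 3 * β ∨ (α < Real.sqrt 3 * β ∧ 4 * h * (β + p) ≥ p ^ 4))
    (hc : 0 < c) (hd : 0 < d) (hcd : c / d ≤ (β + p) / k)
    (hδ₁ : δ₁ = ((a - b - 1) + Real.sqrt ((p - 1) ^ 2 + 4 * β * (c / d))) / 2)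
    (hδ : δ ∈ Ioc (a - 1) δ₁) :
    let G : ℝ → ℝ := fun x =>
      (hyp (a - 1 - δ) (b + δ) p (1 - x ^ d) - hyp (a - 1) b p (1 - x ^ c)) / (1 - x ^ c)
    let C₁ : ℝ := d / (p * c) * ((c / d - 1) * β + (a - b - 1) * δ - δ ^ 2)
    let C₂ : ℝ := 1 / (p * betaFn (a - δ) (b + 1 + δ)) - 1 / (p * betaFn a (b + 1))
    δ₁ < 0 ∧
      StrictAntiOn G (Ioo 0 1) ∧
      Tendsto G (𝓝[>] 0) (𝓝 C₂) ∧
      Tendsto G (𝓝[<] 1) (𝓝 C₁) ∧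
      0 ≤ C₁ ∧
      G '' Ioo 0 1 = Ioo C₁ C₂ := by
  exact stmt0_general a b c d δ δ₁ α β p h k ha (by linarith [ha.2]) hα hβ hp hh hk
    (hcase.imp_right And.right) hc hd hcd hδ₁ (by rwa [max_eq_left (by linarith)])
end

section
/- Assume a ∈ (0,1), b ≥ 1−a, and that α, β, p, h satisfy either α ≥ √3·β, or (α < √3·β and 4h(β+p) ≥ p⁴). Let c, d > 0 with 0 < c/d ≤ (β+p)/k and let δ₁ = [(a−b−1) + √((p−1)² + 4β(c/d))]/2. If δ₁ < δ < 0, then the functions F(a−1−δ, b+δ; p; 1−x^d) and F(a−1, b; p; 1−x^c) of x are not comparable on (0,1): there exist x, y ∈ (0,1) such that F(a−1, b; p; 1−x^c) < F(a−1−δ, b+δ; p; 1−x^d) and F(a−1, b; p; 1−y^c) > F(a−1−δ, b+δ; p; 1−y^d). -/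
open Real Set Filter Topology

/-!
Both functions equal `1` at `x = 1`, and there `δ₁ < δ` orders their slopes `(1-a)bc/p` and
`(1-a+δ)(b+δ)d/p`, because `δ₁` is the larger root of the quadratic in `δ` that expresses equality
of the slopes. Near `x = 0` the order of the functions is the opposite one: the partial sums at `1`
of `F(u,v;u+v+1;·)` are the coefficients of `F(u+1,v+1;u+v+1;·)`, which tend to
`Γ(u+v+1) / (Γ(u+1) Γ(v+1))` by Euler's limit formula, so Abel's theorem gives the limits, and
`Γ(s) Γ(t)` with `s + t` fixed is strictly decreasing in `s t`.
-/

section Pochhammer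

variable {S : Type*} [CommSemiring S]

lemma ascPochhammer_eval_eq_prod_range (n : ℕ) (a : S) :
    (ascPochhammer S n).eval a = ∏ i ∈ Finset.range n, (a + i) := by
  induction n with
  | zero => simp
  | succ n ih => rw [ascPochhammer_succ_eval, ih, Finset.prod_range_succ]

lemma ascPochhammer_succ_eval_left (n : ℕ) (a : S) :
    (ascPochhammer S (n + 1)).eval a = a * (ascPochhammer S n).eval (a + 1) := by
  simp [ascPochhammer_succ_left, Polynomial.eval_comp]

end Pochhammer

lemma hyp_eq_ordinaryHypergeometric (a b c : ℝ) : hyp a b c = ₂F₁ a b c := by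
  funext x
  rw [hyp, ordinaryHypergeometric_eq_tsum]
  refine tsum_congr fun n => ?_
  simp only [ascPochhammer_eval_eq_prod_range, smul_eq_mul]
  ring

section DerivativeAtZero

variable {𝕂 : Type*} [RCLike 𝕂] (a b c : 𝕂)

lemma ordinaryHypergeometricSeries_radius_pos :
    0 < (ordinaryHypergeometricSeries 𝕂 a b c).radius := by
  by_cases habc : ∀ n : ℕ, (n : 𝕂) ≠ -a ∧ (n : 𝕂) ≠ -b ∧ (n : 𝕂) ≠ -c
  · rw [ordinaryHypergeometricSeries_radius_eq_one 𝕂 a b c habc]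
    exact one_pos
  · simp only [not_forall, not_and_or, not_not] at habc
    obtain ⟨n, h | h | h⟩ := habc <;> obtain rfl := neg_eq_iff_eq_neg.1 h.symm
    · simp [ordinaryHypergeometric_radius_top_of_neg_nat₁]
    · simp [ordinaryHypergeometric_radius_top_of_neg_nat₂]
    · simp [ordinaryHypergeometric_radius_top_of_neg_nat₃]

lemma hasDerivAt_ordinaryHypergeometric_zero :
    HasDerivAt (₂F₁ a b c : 𝕂 → 𝕂) (a * b / c) 0 := by
  have hasSeries := (ordinaryHypergeometricSeries 𝕂 a b c).hasFPowerSeriesOnBall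
    (ordinaryHypergeometricSeries_radius_pos a b c)
  refine hasSeries.hasFPowerSeriesAt.hasDerivAt.congr_deriv ?_
  rw [ordinaryHypergeometricSeries_apply_eq]
  simp [div_eq_mul_inv]

end DerivativeAtZero

section Gamma

lemma ne_neg_natCast_of_pos {s : ℝ} (hs : 0 < s) (n : ℕ) : s ≠ -n :=
  ((neg_nonpos.2 n.cast_nonneg).trans_lt hs).ne'

lemma Gamma_mul_Gamma_le_of_mul_le {s t s' t' : ℝ} (hs : 0 < s) (ht : 0 < t)
    (hsum : s + t = s' + t') (hmul : s * t ≤ s' * t') :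
    Gamma s' * Gamma t' ≤ Gamma s * Gamma t := by
  have gammaSeq_mul (u v : ℝ) {n : ℕ} (hn : n ≠ 0) : GammaSeq u n * GammaSeq v n =
      (n : ℝ) ^ (u + v) * (n.factorial : ℝ) ^ 2 /
        ∏ j ∈ Finset.range (n + 1), (u + j) * (v + j) := by
    rw [GammaSeq, GammaSeq, rpow_add (by positivity), Finset.prod_mul_distrib]
    ring
  have factor_le (j : ℕ) : (s + j) * (t + j) ≤ (s' + j) * (t' + j) := by
    linear_combination hmul + (j : ℝ) * hsum
  refine le_of_tendsto_of_tendsto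
    ((GammaSeq_tendsto_Gamma s').mul (GammaSeq_tendsto_Gamma t'))
    ((GammaSeq_tendsto_Gamma s).mul (GammaSeq_tendsto_Gamma t)) ?_
  filter_upwards [eventually_ne_atTop 0] with n hn
  rw [gammaSeq_mul s' t' hn, gammaSeq_mul s t hn, hsum]
  exact div_le_div_of_nonneg_left (by positivity)
    (Finset.prod_pos fun j _ => by positivity)
    (Finset.prod_le_prod (fun j _ => by positivity) fun j _ => factor_le j)

lemma Gamma_mul_Gamma_lt_of_mul_lt {s t s' t' : ℝ} (hs : 0 < s) (ht : 0 < t)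
    (hs' : 0 < s') (ht' : 0 < t') (hsum : s + t = s' + t') (hmul : s * t < s' * t') :
    Gamma s' * Gamma t' < Gamma s * Gamma t := by
  have shift {u v : ℝ} (hu : 0 < u) (hv : 0 < v) :
      Gamma u * Gamma v = Gamma (u + 1) * Gamma (v + 1) / (u * v) := by
    rw [Gamma_add_one hu.ne', Gamma_add_one hv.ne']
    field_simp
  have shifted_le : Gamma (s' + 1) * Gamma (t' + 1) ≤ Gamma (s + 1) * Gamma (t + 1) :=
    Gamma_mul_Gamma_le_of_mul_le (by positivity) (by positivity) (by linear_combination hsum)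
      (by linear_combination hmul + hsum)
  have pos : 0 < Gamma (s + 1) * Gamma (t + 1) :=
    mul_pos (Gamma_pos_of_pos (by positivity)) (Gamma_pos_of_pos (by positivity))
  rw [shift hs' ht', shift hs ht]
  exact div_lt_div₀' shifted_le hmul pos (by positivity)

end Gamma

section LimitAtOne

lemma sum_range_ordinaryHypergeometricCoefficient {𝕂 : Type*} [Field 𝕂] [CharZero 𝕂] {a b c : 𝕂}
    (hc : ∀ n : ℕ, c ≠ -n) (habc : a + b + 1 = c) (n : ℕ) :
    ∑ i ∈ Finset.range (n + 1), ordinaryHypergeometricCoefficient a b c i =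
      ordinaryHypergeometricCoefficient (a + 1) (b + 1) c n := by
  induction n with
  | zero => simp
  | succ n ih =>
    have hcn : c + n ≠ 0 := fun h => hc n (eq_neg_of_add_eq_zero_left h)
    have hn : (n : 𝕂) + 1 ≠ 0 := n.cast_add_one_ne_zero
    rw [Finset.sum_range_succ, ih]
    simp only [ordinaryHypergeometricCoefficient, ascPochhammer_succ_eval_left n a,
      ascPochhammer_succ_eval_left n b, ascPochhammer_succ_eval n (a + 1),
      ascPochhammer_succ_eval n (b + 1), ascPochhammer_succ_eval n c, Nat.factorial_succ,
      Nat.cast_mul, Nat.cast_succ, mul_inv]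
    field_simp
    rw [← habc]
    ring

lemma ordinaryHypergeometricCoefficient_succ_eq_GammaSeq {a b c : ℝ} (habc : a + b = c + 1)
    {n : ℕ} (hn : n ≠ 0) :
    ordinaryHypergeometricCoefficient a b c (n + 1) =
      GammaSeq c n * GammaSeq 1 n / (GammaSeq a n * GammaSeq b n) := by
  have hpow : (n : ℝ) ^ a * (n : ℝ) ^ b = (n : ℝ) ^ c * n := by
    rw [← rpow_add (by positivity), habc, rpow_add_one (by positivity)]
  have hpow_ne : (n : ℝ) ^ c * n ≠ 0 := by positivity
  have hfact : ∏ j ∈ Finset.range (n + 1), ((1 : ℝ) + j) = (n + 1).factorial := by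
    rw [← ascPochhammer_eval_eq_prod_range, ascPochhammer_eval_one]
  have hfact_ne : (n.factorial : ℝ) ≠ 0 := by positivity
  rw [ordinaryHypergeometricCoefficient]
  simp only [ascPochhammer_eval_eq_prod_range]
  symm
  calc GammaSeq c n * GammaSeq 1 n / (GammaSeq a n * GammaSeq b n)
    _ = ((n : ℝ) ^ c * n) / ((n : ℝ) ^ a * (n : ℝ) ^ b) * (n.factorial / n.factorial) ^ 2 *
        (((n + 1).factorial : ℝ)⁻¹ * (∏ j ∈ Finset.range (n + 1), (a + j)) *
          (∏ j ∈ Finset.range (n + 1), (b + j)) * (∏ j ∈ Finset.range (n + 1), (c + j))⁻¹) := by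
      simp only [GammaSeq, hfact, rpow_one, div_eq_mul_inv, mul_inv, inv_inv]
      ring
    _ = _ := by rw [hpow, div_self hpow_ne, div_self hfact_ne, one_pow, one_mul, one_mul]

lemma tendsto_ordinaryHypergeometricCoefficient {a b c : ℝ} (ha : ∀ n : ℕ, a ≠ -n)
    (hb : ∀ n : ℕ, b ≠ -n) (habc : a + b = c + 1) :
    Tendsto (ordinaryHypergeometricCoefficient a b c) atTop
      (𝓝 (Gamma c / (Gamma a * Gamma b))) := by
  rw [← tendsto_add_atTop_iff_nat 1]
  have limit := ((GammaSeq_tendsto_Gamma c).mul (GammaSeq_tendsto_Gamma 1)).div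
    ((GammaSeq_tendsto_Gamma a).mul (GammaSeq_tendsto_Gamma b))
    (mul_ne_zero (Gamma_ne_zero ha) (Gamma_ne_zero hb))
  rw [Gamma_one, mul_one] at limit
  refine limit.congr' ?_
  filter_upwards [eventually_ne_atTop 0] with n hn
  exact (ordinaryHypergeometricCoefficient_succ_eq_GammaSeq habc hn).symm

lemma tendsto_ordinaryHypergeometric_one {a b c : ℝ} (ha : ∀ n : ℕ, a + 1 ≠ -n)
    (hb : ∀ n : ℕ, b + 1 ≠ -n) (hc : ∀ n : ℕ, c ≠ -n) (habc : a + b + 1 = c) :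
    Tendsto (₂F₁ a b c : ℝ → ℝ) (𝓝[<] 1) (𝓝 (Gamma c / (Gamma (a + 1) * Gamma (b + 1)))) := by
  rw [ordinaryHypergeometric_eq_tsum]
  refine Real.tendsto_tsum_powerSeries_nhdsWithin_lt ?_
  rw [← tendsto_add_atTop_iff_nat 1]
  exact (tendsto_ordinaryHypergeometricCoefficient ha hb (by linear_combination habc)).congr
    fun n => (sum_range_ordinaryHypergeometricCoefficient hc habc n).symm

end LimitAtOne

section Comparison

lemma tendsto_one_sub_rpow_nhdsGT_zero {r : ℝ} (hr : 0 < r) :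
    Tendsto (fun x : ℝ => 1 - x ^ r) (𝓝[>] 0) (𝓝[<] 1) := by
  refine tendsto_nhdsWithin_iff.2 ⟨?_, ?_⟩
  · have limit : Tendsto (fun x : ℝ => 1 - x ^ r) (𝓝 0) (𝓝 (1 - 0 ^ r)) :=
      (continuous_const.sub (continuous_rpow_const hr.le)).tendsto 0
    rw [zero_rpow hr.ne', sub_zero] at limit
    exact limit.mono_left nhdsWithin_le_nhds
  · filter_upwards [self_mem_nhdsWithin] with x hx
    exact sub_lt_self 1 (rpow_pos_of_pos hx r)

lemma eventually_nhdsGT_zero_ordinaryHypergeometric_lt {a b a' b' c r s : ℝ} (ha : -1 < a)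
    (hb : -1 < b) (ha' : -1 < a') (hb' : -1 < b') (hc : 0 < c) (hr : 0 < r) (hs : 0 < s)
    (habc : a + b + 1 = c) (habc' : a' + b' + 1 = c) (hmul : a * b < a' * b') :
    ∀ᶠ x in 𝓝[>] (0 : ℝ), ₂F₁ a b c (1 - x ^ r) < ₂F₁ a' b' c (1 - x ^ s) := by
  have limit {u v e : ℝ} (hu : 0 < u + 1) (hv : 0 < v + 1) (he : 0 < e) (huv : u + v + 1 = c) :
      Tendsto (fun x : ℝ => ₂F₁ u v c (1 - x ^ e)) (𝓝[>] 0)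
        (𝓝 (Gamma c / (Gamma (u + 1) * Gamma (v + 1)))) :=
    (tendsto_ordinaryHypergeometric_one (ne_neg_natCast_of_pos hu) (ne_neg_natCast_of_pos hv)
      (ne_neg_natCast_of_pos hc) huv).comp (tendsto_one_sub_rpow_nhdsGT_zero he)
  rw [neg_lt_iff_pos_add] at ha hb ha' hb'
  have gamma_lt : Gamma (a' + 1) * Gamma (b' + 1) < Gamma (a + 1) * Gamma (b + 1) :=
    Gamma_mul_Gamma_lt_of_mul_lt ha hb ha' hb' (by linear_combination habc - habc')
      (by linear_combination hmul + habc - habc')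
  refine (limit ha hb hr habc).eventually_lt (limit ha' hb' hs habc') ?_
  exact div_lt_div_of_pos_left (Gamma_pos_of_pos hc)
    (mul_pos (Gamma_pos_of_pos ha') (Gamma_pos_of_pos hb')) gamma_lt

lemma eventually_nhdsLT_lt_of_hasDerivAt {f g : ℝ → ℝ} {f' g' x : ℝ} (hf : HasDerivAt f f' x)
    (hg : HasDerivAt g g' x) (heq : f x = g x) (hlt : f' < g') :
    ∀ᶠ y in 𝓝[<] x, g y < f y := by
  have hderiv : deriv (g - f) x > 0 := by
    rw [(hg.sub hf).deriv]
    exact sub_pos.2 hlt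
  have hsign := eventually_nhdsWithin_sign_eq_of_deriv_pos hderiv (sub_eq_zero.2 heq.symm)
  filter_upwards [hsign.filter_mono nhdsWithin_le_nhds, self_mem_nhdsWithin] with y hy hyx
  rwa [sign_neg (sub_neg.2 hyx), sign_eq_neg_one_iff, Pi.sub_apply, sub_neg] at hy

lemma hasDerivAt_ordinaryHypergeometric_one_sub_rpow (a b c r : ℝ) :
    HasDerivAt (fun y : ℝ => ₂F₁ a b c (1 - y ^ r)) (-(a * b / c * r)) 1 := by
  have inner : HasDerivAt (fun y : ℝ => 1 - y ^ r) (-r) 1 := by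
    simpa using (hasDerivAt_rpow_const (x := 1) (p := r) (.inl one_ne_zero)).const_sub 1
  have outer : HasDerivAt (₂F₁ a b c : ℝ → ℝ) (a * b / c) (1 - 1 ^ r) := by
    rw [one_rpow, sub_self]
    exact hasDerivAt_ordinaryHypergeometric_zero a b c
  exact (outer.comp 1 inner).congr_deriv (mul_neg _ _)

lemma eventually_nhdsLT_one_ordinaryHypergeometric_lt {a b c r a' b' c' s : ℝ}
    (hslope : a' * b' / c' * s < a * b / c * r) :
    ∀ᶠ y in 𝓝[<] (1 : ℝ), ₂F₁ a' b' c' (1 - y ^ s) < ₂F₁ a b c (1 - y ^ r) :=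
  eventually_nhdsLT_lt_of_hasDerivAt (hasDerivAt_ordinaryHypergeometric_one_sub_rpow a b c r)
    (hasDerivAt_ordinaryHypergeometric_one_sub_rpow a' b' c' s) (by simp) (neg_lt_neg hslope)

end Comparison

-- If the radicand is negative, which needs `1 < a` or `b < 0`, then `√` returns `0` and `δ₁` is the
-- vertex of a quadratic in `δ` that is positive everywhere.
theorem stmt2_general {a b c d δ δ₁ β p : ℝ} (ha : 0 < a) (hab : 0 < a + b)
    (hβ : β = b * (1 - a)) (hp : p = a + b) (hc : 0 < c) (hd : 0 < d)
    (hδ₁ : δ₁ = ((a - b - 1) + √((p - 1) ^ 2 + 4 * β * (c / d))) / 2)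
    (hδ : δ₁ < δ) (hδ0 : δ < 0) :
    (∃ x ∈ Ioo (0 : ℝ) 1,
      hyp (a - 1) b p (1 - x ^ c) < hyp (a - 1 - δ) (b + δ) p (1 - x ^ d)) ∧
    (∃ y ∈ Ioo (0 : ℝ) 1,
      hyp (a - 1) b p (1 - y ^ c) > hyp (a - 1 - δ) (b + δ) p (1 - y ^ d)) := by
  subst hβ hp
  simp only [hyp_eq_ordinaryHypergeometric]
  have hsqrt : √((a + b - 1) ^ 2 + 4 * (b * (1 - a)) * (c / d)) < 2 * δ - (a - b - 1) := by
    linarith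
  have hδ_vertex : (a - b - 1) / 2 < δ := by linarith [(sqrt_nonneg _).trans_lt hsqrt]
  have hproduct : (a - 1) * b < (a - 1 - δ) * (b + δ) := by
    have hδ_neg : a - 1 - b - δ < 0 := by linarith
    linear_combination mul_pos_of_neg_of_neg hδ0 hδ_neg
  have hquad : b * (1 - a) * (c / d) < (1 - a + δ) * (b + δ) := by
    linear_combination lt_sq_of_sqrt_lt hsqrt / 4
  have hslope : (a - 1 - δ) * (b + δ) / (a + b) * d < (a - 1) * b / (a + b) * c := by
    rw [← mul_div_assoc, div_lt_iff₀ hd] at hquad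
    rw [div_mul_eq_mul_div, div_mul_eq_mul_div, div_lt_div_iff_of_pos_right hab]
    linear_combination hquad
  have near_zero := eventually_nhdsGT_zero_ordinaryHypergeometric_lt (by linarith) (by linarith)
    (by linarith) (by linarith) hab hc hd (by ring) (by ring) hproduct
  have near_one := eventually_nhdsLT_one_ordinaryHypergeometric_lt hslope
  obtain ⟨x, hx, hx_mem⟩ := (near_zero.and (Ioo_mem_nhdsGT one_pos)).exists
  obtain ⟨y, hy, hy_mem⟩ := (near_one.and (Ioo_mem_nhdsLT one_pos)).exists
  exact ⟨⟨x, hx_mem, hx⟩, ⟨y, hy_mem, hy⟩⟩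

theorem stmt2 (a b c d δ δ₁ α β p h k : ℝ)
    (ha : a ∈ Ioo (0:ℝ) 1) (hb : 1 - a ≤ b)
    (hα : α = a * (b + 1)) (hβ : β = b * (1 - a)) (hp : p = a + b)
    (hh : h = α * β * (p + β)) (hk : k = β * (p + 1) + p)
    (hcase : α ≥ Real.sqrt 3 * β ∨ (α < Real.sqrt 3 * β ∧ 4 * h * (β + p) ≥ p ^ 4))
    (hc : 0 < c) (hd : 0 < d) (hcd : c / d ≤ (β + p) / k)
    (hδ₁ : δ₁ = ((a - b - 1) + Real.sqrt ((p - 1) ^ 2 + 4 * β * (c / d))) / 2)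
    (hδ : δ₁ < δ) (hδ0 : δ < 0) :
    (∃ x ∈ Ioo (0:ℝ) 1,
      hyp (a - 1) b p (1 - x ^ c) < hyp (a - 1 - δ) (b + δ) p (1 - x ^ d)) ∧
    (∃ y ∈ Ioo (0:ℝ) 1,
      hyp (a - 1) b p (1 - y ^ c) > hyp (a - 1 - δ) (b + δ) p (1 - y ^ d)) :=
  stmt2_general ha.1 (by linarith) hβ hp hc hd hδ₁ hδ hδ0
end
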